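/- arXiv:1810.13057 — 2 statements merged into one kernel-verified Lean document; each statement's English description precedes it below -/
import Mathlib

section
/- Let v : ℝ³ → ℝ³ be continuously differentiable. Then at every (z,r̄,θ̄) with f(r̄,θ̄) ≠ 0, the Euclidean divergence of v satisfies (div v)(T(z,r̄,θ̄)) = (1/f(r̄,θ̄))·[∂_z(v_z·f) + ∂_r̄(v_r̄·f) + ∂_θ̄ v_θ̄](z,r̄,θ̄), where v_z, v_r̄, v_θ̄ are the frame components of v in the coordinates given by T. -/
/-- Partial derivative in the `j`-th coordinate direction on Euclidean `ℝ³`. -/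
noncomputable def pdE {F : Type*} [NormedAddCommGroup F] [NormedSpace ℝ F]
    (j : Fin 3) (g : EuclideanSpace ℝ (Fin 3) → F) (x : EuclideanSpace ℝ (Fin 3)) : F :=
  fderiv ℝ g x (EuclideanSpace.single j 1)

/-- Euclidean divergence `div v = ∂₁v₁ + ∂₂v₂ + ∂₃v₃`. -/
noncomputable def div3 (v : EuclideanSpace ℝ (Fin 3) → EuclideanSpace ℝ (Fin 3))
    (x : EuclideanSpace ℝ (Fin 3)) : ℝ :=
  ∑ i : Fin 3, pdE i (fun y => v y i) x

/-- Curvature `κ(θ̄) = |φ''(θ̄)|` of a unit-speed plane curve. -/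
noncomputable def curveKappa (φ : ℝ → EuclideanSpace ℝ (Fin 2)) (θ : ℝ) : ℝ :=
  ‖deriv (deriv φ) θ‖

/-- Unit normal `N(θ̄) = φ''(θ̄)/|φ''(θ̄)|` of a unit-speed plane curve. -/
noncomputable def curveN (φ : ℝ → EuclideanSpace ℝ (Fin 2)) (θ : ℝ) :
    EuclideanSpace ℝ (Fin 2) :=
  ‖deriv (deriv φ) θ‖⁻¹ • deriv (deriv φ) θ

/-- The factor `f(r̄,θ̄) = 1 − r̄·κ(θ̄)`. -/
noncomputable def fFactor (φ : ℝ → EuclideanSpace ℝ (Fin 2)) (r θ : ℝ) : ℝ :=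
  1 - r * curveKappa φ θ

/-- Embedding `ℝ² ∋ v ↦ (v, 0) ∈ ℝ³`. -/
noncomputable def emb23 (v : EuclideanSpace ℝ (Fin 2)) : EuclideanSpace ℝ (Fin 3) :=
  !₂[v 0, v 1, 0]

/-- The coordinate map `T(z,r̄,θ̄) = (φ(θ̄) + r̄·N(θ̄), z)`. -/
noncomputable def Tmap (φ : ℝ → EuclideanSpace ℝ (Fin 2)) (z r θ : ℝ) :
    EuclideanSpace ℝ (Fin 3) :=
  !₂[(φ θ + r • curveN φ θ) 0, (φ θ + r • curveN φ θ) 1, z]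

/-- Frame component `v_z(z,r̄,θ̄) = v(T(z,r̄,θ̄))·(0,0,1)`. -/
noncomputable def vzComp (φ : ℝ → EuclideanSpace ℝ (Fin 2))
    (v : EuclideanSpace ℝ (Fin 3) → EuclideanSpace ℝ (Fin 3)) (z r θ : ℝ) : ℝ :=
  inner ℝ (v (Tmap φ z r θ)) (EuclideanSpace.single 2 (1:ℝ))

/-- Frame component `v_r̄(z,r̄,θ̄) = v(T(z,r̄,θ̄))·(N(θ̄),0)`. -/
noncomputable def vrComp (φ : ℝ → EuclideanSpace ℝ (Fin 2))
    (v : EuclideanSpace ℝ (Fin 3) → EuclideanSpace ℝ (Fin 3)) (z r θ : ℝ) : ℝ :=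
  inner ℝ (v (Tmap φ z r θ)) (emb23 (curveN φ θ))

/-- Frame component `v_θ̄(z,r̄,θ̄) = v(T(z,r̄,θ̄))·(φ'(θ̄),0)`. -/
noncomputable def vθComp (φ : ℝ → EuclideanSpace ℝ (Fin 2))
    (v : EuclideanSpace ℝ (Fin 3) → EuclideanSpace ℝ (Fin 3)) (z r θ : ℝ) : ℝ :=
  inner ℝ (v (Tmap φ z r θ)) (emb23 (deriv φ θ))

/-- `∂_z` for a function of `(z, r̄, θ̄)`. -/
noncomputable def Dz (g : ℝ → ℝ → ℝ → ℝ) (z r θ : ℝ) : ℝ := deriv (fun s => g s r θ) z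

/-- `∂_r̄` for a function of `(z, r̄, θ̄)`. -/
noncomputable def Dr (g : ℝ → ℝ → ℝ → ℝ) (z r θ : ℝ) : ℝ := deriv (fun s => g z s θ) r

/-- `∂_θ̄` for a function of `(z, r̄, θ̄)`. -/
noncomputable def Dθ (g : ℝ → ℝ → ℝ → ℝ) (z r θ : ℝ) : ℝ := deriv (fun s => g z r s) θ

/-- `emb23` as a continuous linear map. -/
noncomputable def emb23L : EuclideanSpace ℝ (Fin 2) →L[ℝ] EuclideanSpace ℝ (Fin 3) :=
  LinearMap.toContinuousLinearMap
    { toFun := emb23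
      map_add' := by
        intro x y
        ext i
        fin_cases i <;> simp [emb23]
      map_smul' := by
        intro c x
        ext i
        fin_cases i <;> simp [emb23] }

theorem emb23L_apply (x : EuclideanSpace ℝ (Fin 2)) : emb23L x = emb23 x := rfl

theorem emb23_eq (x : EuclideanSpace ℝ (Fin 2)) :
    emb23 x = x 0 • EuclideanSpace.single 0 (1:ℝ) + x 1 • EuclideanSpace.single 1 (1:ℝ) := by
  ext i
  fin_cases i <;> simp [emb23]

theorem Tmap_eq (φ : ℝ → EuclideanSpace ℝ (Fin 2)) (z r θ : ℝ) :
    Tmap φ z r θ = emb23L (φ θ + r • curveN φ θ) + z • EuclideanSpace.single 2 (1:ℝ) := by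
  rw [emb23L_apply]
  ext i
  fin_cases i <;> simp [emb23, Tmap]

theorem plane_frame {t0 t1 n0 n1 : ℝ} (ht : t0 * t0 + t1 * t1 = 1) (hn : n0 * n0 + n1 * n1 = 1)
    (h : t0 * n0 + t1 * n1 = 0) :
    t0 * t0 + n0 * n0 = 1 ∧ t1 * t1 + n1 * n1 = 1 ∧ t0 * t1 + n0 * n1 = 0 := by
  obtain ⟨c, hc⟩ : ∃ c, c = t0 * n1 - t1 * n0 := ⟨_, rfl⟩
  have h0 : n0 = -c * t1 := by
    rw [hc]; linear_combination (-n0) * ht + t0 * h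
  have h1 : n1 = c * t0 := by
    rw [hc]; linear_combination (-n1) * ht + t1 * h
  have hc2 : c * c = 1 := by
    rw [h0, h1] at hn
    linear_combination hn - c * c * ht
  rw [h0, h1]
  refine ⟨?_, ?_, ?_⟩
  · linear_combination ht + t1 * t1 * hc2
  · linear_combination ht + t0 * t0 * hc2
  · linear_combination (-t0 * t1) * hc2

theorem curve_facts (δ : ℝ) (φ : ℝ → EuclideanSpace ℝ (Fin 2))
    (hφ : ContDiffOn ℝ (⊤ : ℕ∞) φ (Set.Ioo (-δ) δ))
    (hunit : ∀ θ ∈ Set.Ioo (-δ) δ, ‖deriv φ θ‖ = 1)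
    (hcurv : ∀ θ ∈ Set.Ioo (-δ) δ, deriv (deriv φ) θ ≠ 0) (θ : ℝ) (hθ : θ ∈ Set.Ioo (-δ) δ) :
    HasDerivAt φ (deriv φ θ) θ ∧
    HasDerivAt (deriv φ) (curveKappa φ θ • curveN φ θ) θ ∧
    HasDerivAt (curveN φ) (-curveKappa φ θ • deriv φ θ) θ ∧
    (deriv φ θ 0 * deriv φ θ 0 + curveN φ θ 0 * curveN φ θ 0 = 1 ∧
     deriv φ θ 1 * deriv φ θ 1 + curveN φ θ 1 * curveN φ θ 1 = 1 ∧
     deriv φ θ 0 * deriv φ θ 1 + curveN φ θ 0 * curveN φ θ 1 = 0) ∧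
    inner ℝ (curveN φ θ) (curveN φ θ) = (1:ℝ) := by
  have hO : IsOpen (Set.Ioo (-δ) δ) := isOpen_Ioo
  have c1 : ContDiffOn ℝ (⊤ : ℕ∞) (deriv φ) (Set.Ioo (-δ) δ) :=
    hφ.deriv_of_isOpen hO (by simp)
  have c2 : ContDiffOn ℝ (⊤ : ℕ∞) (deriv (deriv φ)) (Set.Ioo (-δ) δ) :=
    c1.deriv_of_isOpen hO (by simp)
  have d0 : ∀ s ∈ Set.Ioo (-δ) δ, DifferentiableAt ℝ φ s := fun s hs =>
    (hφ.differentiableOn (by simp)).differentiableAt (hO.mem_nhds hs)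
  have d1 : ∀ s ∈ Set.Ioo (-δ) δ, DifferentiableAt ℝ (deriv φ) s := fun s hs =>
    (c1.differentiableOn (by simp)).differentiableAt (hO.mem_nhds hs)
  have d2 : ∀ s ∈ Set.Ioo (-δ) δ, DifferentiableAt ℝ (deriv (deriv φ)) s := fun s hs =>
    (c2.differentiableOn (by simp)).differentiableAt (hO.mem_nhds hs)
  have dN : DifferentiableAt ℝ (curveN φ) θ := by
    have hn : DifferentiableAt ℝ (fun s => ‖deriv (deriv φ) s‖) θ :=
      (d2 θ hθ).norm ℝ (hcurv θ hθ)
    exact (hn.inv (norm_ne_zero_iff.mpr (hcurv θ hθ))).smul (d2 θ hθ)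
  have hperp : ∀ s ∈ Set.Ioo (-δ) δ, inner ℝ (deriv φ s) (deriv (deriv φ) s) = (0:ℝ) := by
    intro s hs
    have h := (d1 s hs).hasDerivAt.inner ℝ (d1 s hs).hasDerivAt
    have e : (fun u => inner ℝ (deriv φ u) (deriv φ u)) =ᶠ[nhds s] fun _ => (1:ℝ) := by
      filter_upwards [hO.mem_nhds hs] with u hu
      rw [real_inner_self_eq_norm_sq, hunit u hu]; norm_num
    have h' := h.unique ((hasDerivAt_const s (1:ℝ)).congr_of_eventuallyEq e)
    rw [real_inner_comm (deriv φ s) (deriv (deriv φ) s)] at h'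
    linarith [real_inner_comm (deriv φ s) (deriv (deriv φ) s)]
  have hNN : ∀ s ∈ Set.Ioo (-δ) δ, inner ℝ (curveN φ s) (curveN φ s) = (1:ℝ) := by
    intro s hs
    have := norm_ne_zero_iff.mpr (hcurv s hs)
    rw [real_inner_self_eq_norm_sq, curveN, norm_smul, norm_inv, norm_norm, inv_mul_cancel₀ this]
    norm_num
  have hTN : ∀ s ∈ Set.Ioo (-δ) δ, inner ℝ (deriv φ s) (curveN φ s) = (0:ℝ) := by
    intro s hs
    rw [curveN, inner_smul_right, hperp s hs, mul_zero]
  have hκ : deriv (deriv φ) θ = curveKappa φ θ • curveN φ θ := by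
    have := norm_ne_zero_iff.mpr (hcurv θ hθ)
    rw [curveN, curveKappa, smul_smul, mul_inv_cancel₀ this, one_smul]
  have h1 := (d1 θ hθ).hasDerivAt
  rw [hκ] at h1
  have hN := dN.hasDerivAt
  have q1 : inner ℝ (curveN φ θ) (deriv (curveN φ) θ) = (0:ℝ) := by
    have h := hN.inner ℝ hN
    have e : (fun u => inner ℝ (curveN φ u) (curveN φ u)) =ᶠ[nhds θ] fun _ => (1:ℝ) := by
      filter_upwards [hO.mem_nhds hθ] with u hu using hNN u hu
    have h' := h.unique ((hasDerivAt_const θ (1:ℝ)).congr_of_eventuallyEq e)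
    linarith [real_inner_comm (curveN φ θ) (deriv (curveN φ) θ)]
  have q2 : inner ℝ (deriv φ θ) (deriv (curveN φ) θ) = -curveKappa φ θ := by
    have h := h1.inner ℝ hN
    have e : (fun u => inner ℝ (deriv φ u) (curveN φ u)) =ᶠ[nhds θ] fun _ => (0:ℝ) := by
      filter_upwards [hO.mem_nhds hθ] with u hu using hTN u hu
    have h' := h.unique ((hasDerivAt_const θ (0:ℝ)).congr_of_eventuallyEq e)
    rw [inner_smul_left, hNN θ hθ] at h'
    simp at h'
    linarith
  have ht : inner ℝ (deriv φ θ) (deriv φ θ) = (1:ℝ) := by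
    rw [real_inner_self_eq_norm_sq, hunit θ hθ]; norm_num
  have hn := hNN θ hθ
  have htn := hTN θ hθ
  simp only [PiLp.inner_apply, Fin.sum_univ_two, RCLike.inner_apply, conj_trivial] at ht hn htn q1 q2
  obtain ⟨f1, f2, f3⟩ := plane_frame ht hn (by linear_combination htn)
  refine ⟨(d0 θ hθ).hasDerivAt, h1, ?_, ⟨f1, f2, f3⟩, hNN θ hθ⟩
  have : deriv (curveN φ) θ = -curveKappa φ θ • deriv φ θ := by
    ext i
    fin_cases i
    · simp
      linear_combination (-deriv (curveN φ) θ 0) * f1 - deriv (curveN φ) θ 1 * f3 +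
        curveN φ θ 0 * q1 + deriv φ θ 0 * q2
    · simp
      linear_combination (-deriv (curveN φ) θ 1) * f2 - deriv (curveN φ) θ 0 * f3 +
        curveN φ θ 1 * q1 + deriv φ θ 1 * q2
  rwa [this] at hN

/-- For a `C¹` vector field `v : ℝ³ → ℝ³`, at every `(z,r̄,θ̄)` with
`f(r̄,θ̄) ≠ 0`, the Euclidean divergence satisfies
`(div v)(T(z,r̄,θ̄)) = (1/f)·[∂_z(v_z f) + ∂_r̄(v_r̄ f) + ∂_θ̄ v_θ̄]`. -/
theorem stmt8 (δ : ℝ) (hδ : 0 < δ) (φ : ℝ → EuclideanSpace ℝ (Fin 2))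
    (hφ : ContDiffOn ℝ (⊤ : ℕ∞) φ (Set.Ioo (-δ) δ))
    (hunit : ∀ θ ∈ Set.Ioo (-δ) δ, ‖deriv φ θ‖ = 1)
    (hcurv : ∀ θ ∈ Set.Ioo (-δ) δ, deriv (deriv φ) θ ≠ 0)
    (v : EuclideanSpace ℝ (Fin 3) → EuclideanSpace ℝ (Fin 3))
    (hv : ContDiff ℝ 1 v) :
    ∀ z r : ℝ, ∀ θ ∈ Set.Ioo (-δ) δ, fFactor φ r θ ≠ 0 →
      div3 v (Tmap φ z r θ)
        = (1 / fFactor φ r θ) *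
          (Dz (fun z' r' θ' => vzComp φ v z' r' θ' * fFactor φ r' θ') z r θ
            + Dr (fun z' r' θ' => vrComp φ v z' r' θ' * fFactor φ r' θ') z r θ
            + Dθ (vθComp φ v) z r θ) := by
  intro z r θ hθ hf
  obtain ⟨h0, h1, hN, ⟨f1, f2, f3⟩, hNN⟩ := curve_facts δ φ hφ hunit hcurv θ hθ
  have hvd : HasFDerivAt v (fderiv ℝ v (Tmap φ z r θ)) (Tmap φ z r θ) :=
    ((hv.differentiable (by simp)) _).hasFDerivAt
  set L := fderiv ℝ v (Tmap φ z r θ) with hL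
  have hdiv : div3 v (Tmap φ z r θ) = L (EuclideanSpace.single 0 1) 0 +
      L (EuclideanSpace.single 1 1) 1 + L (EuclideanSpace.single 2 1) 2 := by
    have key : ∀ i : Fin 3, pdE i (fun y => v y i) (Tmap φ z r θ) =
        L (EuclideanSpace.single i 1) i := by
      intro i
      have : HasFDerivAt (fun y => v y i) ((EuclideanSpace.proj i).comp L) (Tmap φ z r θ) :=
        (EuclideanSpace.proj i : EuclideanSpace ℝ (Fin 3) →L[ℝ] ℝ).hasFDerivAt.comp _ hvd
      rw [pdE, this.fderiv]
      rfl
    rw [div3, Fin.sum_univ_three, key, key, key]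
  -- derivatives of the coordinate map
  have Tz : HasDerivAt (fun s => Tmap φ s r θ) (EuclideanSpace.single 2 (1:ℝ)) z := by
    simp only [Tmap_eq]
    simpa using ((hasDerivAt_id z).smul_const (EuclideanSpace.single (2 : Fin 3) (1:ℝ))).const_add
      (emb23L (φ θ + r • curveN φ θ))
  have Tr : HasDerivAt (fun s => Tmap φ z s θ) (emb23L (curveN φ θ)) r := by
    simp only [Tmap_eq]
    have a : HasDerivAt (fun s : ℝ => φ θ + s • curveN φ θ) (curveN φ θ) r := by
      simpa using ((hasDerivAt_id r).smul_const (curveN φ θ)).const_add (φ θ)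
    exact (emb23L.hasFDerivAt.comp_hasDerivAt r a).add_const _
  have Tθ : HasDerivAt (fun s => Tmap φ z r s) (fFactor φ r θ • emb23L (deriv φ θ)) θ := by
    simp only [Tmap_eq]
    have a : HasDerivAt (fun s : ℝ => φ s + r • curveN φ s) (fFactor φ r θ • deriv φ θ) θ := by
      have := h0.add (hN.const_smul r)
      have e : fFactor φ r θ • deriv φ θ = deriv φ θ + r • (-curveKappa φ θ • deriv φ θ) := by
        rw [fFactor, smul_smul, sub_smul, one_smul, mul_neg, neg_smul, sub_eq_add_neg]
      rw [e]
      exact this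
    rw [← map_smul]
    exact (emb23L.hasFDerivAt.comp_hasDerivAt θ a).add_const _
  have vz := (hvd.comp_hasDerivAt z Tz)
  have vr := (hvd.comp_hasDerivAt r Tr)
  have vθ := (hvd.comp_hasDerivAt θ Tθ)
  have Ez : Dz (fun z' r' θ' => vzComp φ v z' r' θ' * fFactor φ r' θ') z r θ =
      inner ℝ (L (EuclideanSpace.single 2 1)) (EuclideanSpace.single 2 (1:ℝ)) * fFactor φ r θ := by
    have := (vz.inner ℝ (hasDerivAt_const z (EuclideanSpace.single (2 : Fin 3) (1:ℝ)))).mul_const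
      (fFactor φ r θ)
    rw [inner_zero_right, zero_add] at this
    exact this.deriv
  have Er : Dr (fun z' r' θ' => vrComp φ v z' r' θ' * fFactor φ r' θ') z r θ =
      inner ℝ (L (emb23L (curveN φ θ))) (emb23 (curveN φ θ)) * fFactor φ r θ
        - vrComp φ v z r θ * curveKappa φ θ := by
    have b : HasDerivAt (fun s => fFactor φ s θ) (-curveKappa φ θ) r := by
      simpa [fFactor] using ((hasDerivAt_id r).mul_const (curveKappa φ θ)).const_sub 1
    have := (vr.inner ℝ (hasDerivAt_const r (emb23 (curveN φ θ)))).mul b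
    rw [inner_zero_right, zero_add, mul_neg, ← sub_eq_add_neg] at this
    exact this.deriv
  have Eθ : Dθ (vθComp φ v) z r θ =
      vrComp φ v z r θ * curveKappa φ θ +
        fFactor φ r θ * inner ℝ (L (emb23L (deriv φ θ))) (emb23 (deriv φ θ)) := by
    have b := emb23L.hasFDerivAt.comp_hasDerivAt θ h1
    have := vθ.inner ℝ b
    rw [map_smul, map_smul, inner_smul_right, real_inner_smul_left, mul_comm (curveKappa φ θ)] at this
    exact this.deriv
  rw [hdiv, Ez, Er, Eθ, emb23L_apply, emb23L_apply]
  have tr : L (EuclideanSpace.single 0 1) 0 +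
      L (EuclideanSpace.single 1 1) 1 + L (EuclideanSpace.single 2 1) 2 =
      inner ℝ (L (EuclideanSpace.single 2 1)) (EuclideanSpace.single 2 (1:ℝ)) +
      inner ℝ (L (emb23 (curveN φ θ))) (emb23 (curveN φ θ)) +
      inner ℝ (L (emb23 (deriv φ θ))) (emb23 (deriv φ θ)) := by
    simp only [emb23_eq, map_add, map_smul, PiLp.inner_apply, Fin.sum_univ_three]
    simp
    linear_combination (-L (EuclideanSpace.single 0 1) 0) * f1 - L (EuclideanSpace.single 1 1) 1 * f2
      - (L (EuclideanSpace.single 0 1) 1 + L (EuclideanSpace.single 1 1) 0) * f3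
  rw [tr]
  field_simp
  ring
end

section
/- Let v : ℝ³ → ℝ³ be smooth, divergence-free on ℝ³ (div v = 0), and vanishing identically on the boundary plane {x ∈ ℝ³ : x₃ = 0}. Then at every point of the form (0, 0, θ̄): ∂_θ̄[ (curl curl v)(T(z,r̄,θ̄))·(0,0,1) ] evaluated at (0,0,θ̄) equals −κ'(θ̄)·∂_z v_r̄ − κ(θ̄)·∂_z∂_θ̄ v_r̄ + ∂_z∂_r̄∂_θ̄ v_r̄ + ∂_z∂_θ̄² v_θ̄, with all frame components evaluated at (0,0,θ̄). (Since div v = 0, curl curl v = −Δv, so this computes the tangential derivative of the normal component of the vector Laplacian of v along the curve on the boundary.) -/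
/-- Euclidean curl of a vector field on `ℝ³`. -/
noncomputable def curl3 (w : EuclideanSpace ℝ (Fin 3) → EuclideanSpace ℝ (Fin 3))
    (x : EuclideanSpace ℝ (Fin 3)) : EuclideanSpace ℝ (Fin 3) :=
  !₂[pdE 1 (fun y => w y 2) x - pdE 2 (fun y => w y 1) x,
    pdE 2 (fun y => w y 0) x - pdE 0 (fun y => w y 2) x,
    pdE 0 (fun y => w y 1) x - pdE 1 (fun y => w y 0) x]

open Set Topology

abbrev Uset (δ : ℝ) : Set (ℝ × ℝ × ℝ) := {p | p.2.2 ∈ Set.Ioo (-δ) δ}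

def unc (g : ℝ → ℝ → ℝ → ℝ) (p : ℝ × ℝ × ℝ) : ℝ := g p.1 p.2.1 p.2.2

lemma isOpen_Uset (δ : ℝ) : IsOpen (Uset δ) :=
  isOpen_Ioo.preimage (by fun_prop : Continuous fun p : ℝ × ℝ × ℝ => p.2.2)

/-- Smoothness on the coordinate domain. -/
def Sm (δ : ℝ) (g : ℝ → ℝ → ℝ → ℝ) : Prop := ContDiffOn ℝ (⊤ : ℕ∞) (unc g) (Uset δ)

lemma Sm.cda {δ : ℝ} {g : ℝ → ℝ → ℝ → ℝ} (h : Sm δ g) {z r θ : ℝ} (hθ : θ ∈ Ioo (-δ) δ) :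
    ContDiffAt ℝ (⊤ : ℕ∞) (unc g) (z, r, θ) :=
  h.contDiffAt ((isOpen_Uset δ).mem_nhds hθ)

lemma Sm.diff {δ : ℝ} {g : ℝ → ℝ → ℝ → ℝ} (h : Sm δ g) {z r θ : ℝ} (hθ : θ ∈ Ioo (-δ) δ) :
    DifferentiableAt ℝ (unc g) (z, r, θ) :=
  (h.cda hθ).differentiableAt (by simp)

lemma Sm.dz {δ : ℝ} {g : ℝ → ℝ → ℝ → ℝ} (h : Sm δ g) {z r θ : ℝ} (hθ : θ ∈ Ioo (-δ) δ) :
    HasDerivAt (fun s => g s r θ) (fderiv ℝ (unc g) (z, r, θ) (1, 0, 0)) z :=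
  (h.diff hθ).hasFDerivAt.comp_hasDerivAt (f := fun s : ℝ => (s, r, θ)) z
    ((hasDerivAt_id z).prodMk ((hasDerivAt_const z r).prodMk (hasDerivAt_const z θ)))

lemma Sm.dr {δ : ℝ} {g : ℝ → ℝ → ℝ → ℝ} (h : Sm δ g) {z r θ : ℝ} (hθ : θ ∈ Ioo (-δ) δ) :
    HasDerivAt (fun s => g z s θ) (fderiv ℝ (unc g) (z, r, θ) (0, 1, 0)) r :=
  (h.diff hθ).hasFDerivAt.comp_hasDerivAt (f := fun s : ℝ => (z, s, θ)) r
    ((hasDerivAt_const r z).prodMk ((hasDerivAt_id r).prodMk (hasDerivAt_const r θ)))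

lemma Sm.dθ {δ : ℝ} {g : ℝ → ℝ → ℝ → ℝ} (h : Sm δ g) {z r θ : ℝ} (hθ : θ ∈ Ioo (-δ) δ) :
    HasDerivAt (fun s => g z r s) (fderiv ℝ (unc g) (z, r, θ) (0, 0, 1)) θ :=
  (h.diff hθ).hasFDerivAt.comp_hasDerivAt (f := fun s : ℝ => (z, r, s)) θ
    ((hasDerivAt_const θ z).prodMk ((hasDerivAt_const θ r).prodMk (hasDerivAt_id θ)))

lemma Sm.fd {δ : ℝ} {g : ℝ → ℝ → ℝ → ℝ} (h : Sm δ g) (e : ℝ × ℝ × ℝ) :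
    ContDiffOn ℝ (⊤ : ℕ∞) (fun p => fderiv ℝ (unc g) p e) (Uset δ) :=
  (h.fderiv_of_isOpen (isOpen_Uset δ) (by simp)).clm_apply contDiffOn_const

lemma Sm.Dz_eq {δ : ℝ} {g : ℝ → ℝ → ℝ → ℝ} (h : Sm δ g) :
    EqOn (unc (Dz g)) (fun p => fderiv ℝ (unc g) p (1, 0, 0)) (Uset δ) :=
  fun _ hp => (h.dz hp).deriv

lemma Sm.Dr_eq {δ : ℝ} {g : ℝ → ℝ → ℝ → ℝ} (h : Sm δ g) :
    EqOn (unc (Dr g)) (fun p => fderiv ℝ (unc g) p (0, 1, 0)) (Uset δ) :=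
  fun _ hp => (h.dr hp).deriv

lemma Sm.Dθ_eq {δ : ℝ} {g : ℝ → ℝ → ℝ → ℝ} (h : Sm δ g) :
    EqOn (unc (Dθ g)) (fun p => fderiv ℝ (unc g) p (0, 0, 1)) (Uset δ) :=
  fun _ hp => (h.dθ hp).deriv

lemma Sm.Dz {δ : ℝ} {g : ℝ → ℝ → ℝ → ℝ} (h : Sm δ g) : Sm δ (Dz g) := (h.fd _).congr h.Dz_eq
lemma Sm.Dr {δ : ℝ} {g : ℝ → ℝ → ℝ → ℝ} (h : Sm δ g) : Sm δ (Dr g) := (h.fd _).congr h.Dr_eq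
lemma Sm.Dθ {δ : ℝ} {g : ℝ → ℝ → ℝ → ℝ} (h : Sm δ g) : Sm δ (Dθ g) := (h.fd _).congr h.Dθ_eq

lemma Sm.swap {δ : ℝ} {g a b : ℝ → ℝ → ℝ → ℝ} (h : Sm δ g) {e₁ e₂ p : ℝ × ℝ × ℝ}
    (ha : EqOn (unc a) (fun p => fderiv ℝ (unc g) p e₁) (Uset δ))
    (hb : EqOn (unc b) (fun p => fderiv ℝ (unc g) p e₂) (Uset δ)) (hp : p ∈ Uset δ) :
    fderiv ℝ (unc a) p e₂ = fderiv ℝ (unc b) p e₁ := by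
  have hn := (isOpen_Uset δ).mem_nhds hp
  rw [(ha.eventuallyEq_of_mem hn).fderiv_eq, (hb.eventuallyEq_of_mem hn).fderiv_eq]
  have hs : ContDiffAt ℝ (⊤ : ℕ∞) (unc g) p := h.contDiffAt hn
  have hd : DifferentiableAt ℝ (fderiv ℝ (unc g)) p :=
    (hs.fderiv_right (m := 1) (by norm_cast)).differentiableAt (by simp)
  rw [fderiv_clm_apply hd (by fun_prop), fderiv_clm_apply hd (by fun_prop)]
  simp
  exact (hs.isSymmSndFDerivAt (by simp; norm_cast)) _ _

lemma Sm.zr {δ : ℝ} {g : ℝ → ℝ → ℝ → ℝ} (h : Sm δ g) {z r θ : ℝ} (hθ : θ ∈ Ioo (-δ) δ) :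
    _root_.Dz (_root_.Dr g) z r θ = _root_.Dr (_root_.Dz g) z r θ :=
  (h.Dr.dz hθ).deriv.trans ((h.swap h.Dr_eq h.Dz_eq hθ).trans (h.Dz.dr hθ).deriv.symm)

lemma Sm.zθ {δ : ℝ} {g : ℝ → ℝ → ℝ → ℝ} (h : Sm δ g) {z r θ : ℝ} (hθ : θ ∈ Ioo (-δ) δ) :
    _root_.Dz (_root_.Dθ g) z r θ = _root_.Dθ (_root_.Dz g) z r θ :=
  (h.Dθ.dz hθ).deriv.trans ((h.swap h.Dθ_eq h.Dz_eq hθ).trans (h.Dz.dθ hθ).deriv.symm)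

lemma Sm.rθ {δ : ℝ} {g : ℝ → ℝ → ℝ → ℝ} (h : Sm δ g) {z r θ : ℝ} (hθ : θ ∈ Ioo (-δ) δ) :
    _root_.Dr (_root_.Dθ g) z r θ = _root_.Dθ (_root_.Dr g) z r θ :=
  (h.Dθ.dr hθ).deriv.trans ((h.swap h.Dθ_eq h.Dr_eq hθ).trans (h.Dr.dθ hθ).deriv.symm)

lemma Dr_congr' {δ : ℝ} {g k : ℝ → ℝ → ℝ → ℝ}
    (h : ∀ z r, ∀ θ ∈ Ioo (-δ) δ, g z r θ = k z r θ) :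
    ∀ z r, ∀ θ ∈ Ioo (-δ) δ, Dr g z r θ = Dr k z r θ := by
  intro z r θ hθ
  unfold Dr
  congr 1
  funext s
  exact h _ _ _ hθ

lemma Dθ_congr' {δ : ℝ} {g k : ℝ → ℝ → ℝ → ℝ}
    (h : ∀ z r, ∀ θ ∈ Ioo (-δ) δ, g z r θ = k z r θ) :
    ∀ z r, ∀ θ ∈ Ioo (-δ) δ, Dθ g z r θ = Dθ k z r θ := by
  intro z r θ hθ
  unfold Dθ
  apply Filter.EventuallyEq.deriv_eq
  filter_upwards [isOpen_Ioo.mem_nhds hθ] with s hs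
  exact h _ _ _ hs

abbrev E2 := EuclideanSpace ℝ (Fin 2)
abbrev E3 := EuclideanSpace ℝ (Fin 3)

lemma curveN_smooth {δ : ℝ} {φ : ℝ → E2} (hφ : ContDiffOn ℝ (⊤ : ℕ∞) φ (Ioo (-δ) δ))
    (hcurv : ∀ θ ∈ Set.Ioo (-δ) δ, deriv (deriv φ) θ ≠ 0) :
    ContDiffOn ℝ (⊤ : ℕ∞) (deriv φ) (Ioo (-δ) δ) ∧
    ContDiffOn ℝ (⊤ : ℕ∞) (curveKappa φ) (Ioo (-δ) δ) ∧
    ContDiffOn ℝ (⊤ : ℕ∞) (curveN φ) (Ioo (-δ) δ) := by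
  have h1 := hφ.deriv_of_isOpen (m := (⊤ : ℕ∞)) isOpen_Ioo (by simp)
  have h2 := h1.deriv_of_isOpen (m := (⊤ : ℕ∞)) isOpen_Ioo (by simp)
  have h3 : ContDiffOn ℝ (⊤ : ℕ∞) (curveKappa φ) (Ioo (-δ) δ) := h2.norm ℝ hcurv
  exact ⟨h1, h3, (h3.inv fun x hx => norm_ne_zero_iff.2 (hcurv x hx)).smul h2⟩

/-- frame component against a general planar frame vector -/
lemma comp_smooth {δ : ℝ} {φ M : ℝ → E2} (hφ : ContDiffOn ℝ (⊤ : ℕ∞) φ (Ioo (-δ) δ))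
    (hN : ContDiffOn ℝ (⊤ : ℕ∞) (curveN φ) (Ioo (-δ) δ))
    (hM : ContDiffOn ℝ (⊤ : ℕ∞) M (Ioo (-δ) δ))
    {v : E3 → E3} (hv : ContDiff ℝ (⊤ : ℕ∞) v) :
    Sm δ (fun z r θ => inner ℝ (v (Tmap φ z r θ)) (emb23 (M θ))) := by
  have hm : MapsTo (fun p : ℝ × ℝ × ℝ => p.2.2) (Uset δ) (Ioo (-δ) δ) := fun p hp => hp
  have hs : ContDiffOn ℝ (⊤ : ℕ∞) (fun p : ℝ × ℝ × ℝ => p.2.2) (Uset δ) := by fun_prop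
  have h21 : ContDiffOn ℝ (⊤ : ℕ∞) (fun p : ℝ × ℝ × ℝ => p.2.1) (Uset δ) := by fun_prop
  have hφ' := hφ.comp hs hm
  have hN' := hN.comp hs hm
  have hM' := hM.comp hs hm
  have hX : ContDiffOn ℝ (⊤ : ℕ∞) (fun p : ℝ × ℝ × ℝ => φ p.2.2 + p.2.1 • curveN φ p.2.2)
      (Uset δ) := hφ'.add (h21.smul hN')
  have hX' := contDiffOn_piLp 2 |>.1 hX
  have hMc := contDiffOn_piLp 2 |>.1 hM'
  unfold Sm unc
  refine ContDiffOn.inner ℝ (hv.comp_contDiffOn ?_) ?_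
  · rw [contDiffOn_piLp 2]
    intro i
    fin_cases i
    · exact hX' 0
    · exact hX' 1
    · simp [Tmap]; fun_prop
  · rw [contDiffOn_piLp 2]
    intro i
    fin_cases i
    · exact hMc 0
    · exact hMc 1
    · simp [emb23]; fun_prop

lemma W_smooth {v : E3 → E3} (hv : ContDiff ℝ (⊤ : ℕ∞) v) (j : Fin 3) :
    ContDiff ℝ (⊤ : ℕ∞) (pdE j v) :=
  (hv.fderiv_right (by simp)).clm_apply contDiff_const

lemma pd_smooth {v : E3 → ℝ} (hv : ContDiff ℝ (⊤ : ℕ∞) v) (j : Fin 3) :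
    ContDiff ℝ (⊤ : ℕ∞) (pdE j v) :=
  (hv.fderiv_right (by simp)).clm_apply contDiff_const

lemma hasDerivAt_euc {n : ℕ} {f : ℝ → EuclideanSpace ℝ (Fin n)} {f' : EuclideanSpace ℝ (Fin n)}
    {x : ℝ} : HasDerivAt f f' x ↔ ∀ i, HasDerivAt (fun s => f s i) (f' i) x := by
  simp only [hasDerivAt_iff_hasFDerivAt, ← hasFDerivWithinAt_univ]
  rw [hasFDerivWithinAt_piLp 2]
  refine forall_congr' fun i => ?_
  have : (PiLp.proj 2 (fun _ : Fin n => ℝ) i).comp (ContinuousLinearMap.toSpanSingleton ℝ f')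
      = ContinuousLinearMap.toSpanSingleton ℝ (f' i) := by
    ext; simp
  rw [← this]

lemma T_dz (φ : ℝ → E2) (z r θ : ℝ) :
    HasDerivAt (fun s => Tmap φ s r θ) (EuclideanSpace.single 2 1) z := by
  rw [hasDerivAt_euc]
  intro i
  fin_cases i
  · simpa [Tmap] using hasDerivAt_const z _
  · simpa [Tmap] using hasDerivAt_const z _
  · simpa [Tmap] using hasDerivAt_id' z

lemma comp_dz (φ M : ℝ → E2) {v : E3 → E3} (hv : ContDiff ℝ (⊤ : ℕ∞) v) :
    Dz (fun z r θ => inner ℝ (v (Tmap φ z r θ)) (emb23 (M θ))) =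
      fun z r θ => inner ℝ (pdE 2 v (Tmap φ z r θ)) (emb23 (M θ)) := by
  funext z r θ
  have h := ((hv.differentiable (by simp)) (Tmap φ z r θ)).hasFDerivAt.comp_hasDerivAt
    z (T_dz φ z r θ)
  have := (h.inner ℝ (hasDerivAt_const z (emb23 (M θ)))).deriv
  simpa [Dz, pdE] using this

lemma pdE_comp {v : E3 → E3} {x : E3} (hv : DifferentiableAt ℝ v x) (i j : Fin 3) :
    pdE j (fun y => v y i) x = (pdE j v x) i := by
  have h : HasFDerivAt (fun y => v y i) ((EuclideanSpace.proj i).comp (fderiv ℝ v x)) x :=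
    (EuclideanSpace.proj (𝕜 := ℝ) i).hasFDerivAt.comp x hv.hasFDerivAt
  simp [pdE, h.fderiv]

lemma pdE_zero_on {g : E3 → ℝ} (hg : ContDiff ℝ (⊤ : ℕ∞) g) (hb : ∀ x : E3, x 2 = 0 → g x = 0)
    (j : Fin 3) (hj : j ≠ 2) : ∀ x : E3, x 2 = 0 → pdE j g x = 0 := by
  intro x hx
  have h1 : HasDerivAt (fun t : ℝ => x + t • (EuclideanSpace.single j 1 : E3))
      (EuclideanSpace.single j 1) 0 := by
    simpa using ((hasDerivAt_id (0:ℝ)).smul_const (EuclideanSpace.single j 1 : E3)).const_add x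
  have h2 : HasFDerivAt g (fderiv ℝ g x) (x + (0:ℝ) • (EuclideanSpace.single j 1 : E3)) := by
    simpa using ((hg.differentiable (by simp)) x).hasFDerivAt
  have h3 := h2.comp_hasDerivAt (0:ℝ) h1
  have h4 : (g ∘ fun t : ℝ => x + t • (EuclideanSpace.single j 1 : E3)) = fun _ => 0 := by
    funext t
    apply hb
    simp [hx, hj.symm]
  rw [h4] at h3
  exact h3.unique (hasDerivAt_const _ _)

lemma lhs_eq {v : E3 → E3} (hv : ContDiff ℝ (⊤ : ℕ∞) v)
    (hbd : ∀ x : E3, x 2 = 0 → v x = 0) (x : E3) (hx : x 2 = 0) :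
    (inner ℝ (curl3 (curl3 v) x) (EuclideanSpace.single 2 (1:ℝ)) : ℝ) =
      (pdE 0 (pdE 2 v) x) 0 + (pdE 1 (pdE 2 v) x) 1 := by
  have hc : ∀ i : Fin 3, ContDiff ℝ (⊤ : ℕ∞) (fun y => v y i) := contDiff_piLp 2 |>.1 hv
  have hp : ∀ i j : Fin 3, Differentiable ℝ (pdE j (fun y => v y i)) := fun i j =>
    (pd_smooth (hc i) j).differentiable (by simp)
  have hsub : ∀ (j : Fin 3) (f g : E3 → ℝ), Differentiable ℝ f → Differentiable ℝ g →
      pdE j (fun y => f y - g y) x = pdE j f x - pdE j g x := by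
    intro j f g hf hg
    simp only [pdE]
    rw [fderiv_fun_sub (hf x) (hg x)]
    rfl
  have hz : ∀ j : Fin 3, j ≠ 2 → pdE j (pdE j (fun y => v y 2)) x = 0 := fun j hj =>
    pdE_zero_on (pd_smooth (hc 2) j)
      (pdE_zero_on (hc 2) (fun x hx => by simp [hbd x hx]) j hj) j hj x hx
  have hW : ∀ i : Fin 3, pdE i (pdE 2 (fun y => v y i)) x = (pdE i (pdE 2 v) x) i := by
    intro i
    rw [← pdE_comp ((W_smooth hv 2).differentiable (by simp) x)]
    congr 1
    funext y
    exact pdE_comp (hv.differentiable (by simp) y) _ _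
  have e : (inner ℝ (curl3 (curl3 v) x) (EuclideanSpace.single 2 (1:ℝ)) : ℝ) =
      pdE 0 (fun y => pdE 2 (fun y => v y 0) y - pdE 0 (fun y => v y 2) y) x -
      pdE 1 (fun y => pdE 1 (fun y => v y 2) y - pdE 2 (fun y => v y 1) y) x := by
    rw [EuclideanSpace.inner_single_right]
    simp [curl3]
  rw [e, hsub _ _ _ (hp _ _) (hp _ _), hsub _ _ _ (hp _ _) (hp _ _), hz 0 (by decide),
    hz 1 (by decide), hW, hW]
  ring

lemma inner_emb (x : E3) (m : E2) : inner ℝ x (emb23 m) = x 0 * m 0 + x 1 * m 1 := by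
  simp [emb23, PiLp.inner_apply, Fin.sum_univ_three]
  ring

lemma fd_emb {W : E3 → E3} (x : E3) (m : E2) :
    fderiv ℝ W x (emb23 m) = m 0 • pdE 0 W x + m 1 • pdE 1 W x := by
  have : emb23 m = m 0 • EuclideanSpace.single 0 1 + m 1 • EuclideanSpace.single 1 1 := by
    ext i
    fin_cases i <;> simp [emb23]
  rw [this]
  simp [pdE]

lemma T_dr (φ : ℝ → E2) (z r θ : ℝ) :
    HasDerivAt (fun s => Tmap φ z s θ) (emb23 (curveN φ θ)) r := by
  rw [hasDerivAt_euc]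
  intro i
  fin_cases i
  · simpa [Tmap, emb23] using ((hasDerivAt_id r).mul_const (curveN φ θ 0)).const_add (φ θ 0)
  · simpa [Tmap, emb23] using ((hasDerivAt_id r).mul_const (curveN φ θ 1)).const_add (φ θ 1)
  · simpa [Tmap, emb23] using hasDerivAt_const r _

lemma emb_deriv {M : ℝ → E2} {θ : ℝ} (hM : DifferentiableAt ℝ M θ) :
    HasDerivAt (fun s => emb23 (M s)) (emb23 (deriv M θ)) θ := by
  have h := hasDerivAt_euc.1 hM.hasDerivAt
  rw [hasDerivAt_euc]
  intro i
  fin_cases i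
  · simpa [emb23] using h 0
  · simpa [emb23] using h 1
  · simpa [emb23] using hasDerivAt_const θ (0:ℝ)

lemma T_zero (φ : ℝ → E2) (θ : ℝ) : Tmap φ 0 0 θ = emb23 (φ θ) := by
  simp [Tmap, emb23]

lemma ortho_alg {a b c d : ℝ} (h1 : a * a + b * b = 1) (h2 : c * c + d * d = 1)
    (h3 : a * c + b * d = 0) : a * a + c * c = 1 ∧ a * b + c * d = 0 ∧ b * b + d * d = 1 := by
  have k : (!![a, b; c, d] : Matrix (Fin 2) (Fin 2) ℝ) * !![a, c; b, d] = 1 := by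
    ext i j
    fin_cases i <;> fin_cases j <;> simp <;> linarith
  have k' := mul_eq_one_comm.1 k
  have e := fun i j => congrFun (congrFun k' i) j
  have e00 := e 0 0
  have e01 := e 0 1
  have e11 := e 1 1
  simp at e00 e01 e11
  exact ⟨e00, e01, e11⟩

lemma div_frame {δ : ℝ} {φ : ℝ → E2} (hφ : ContDiffOn ℝ (⊤ : ℕ∞) φ (Ioo (-δ) δ))
    (hunit : ∀ θ ∈ Set.Ioo (-δ) δ, ‖deriv φ θ‖ = 1)
    (hcurv : ∀ θ ∈ Set.Ioo (-δ) δ, deriv (deriv φ) θ ≠ 0)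
    {W : E3 → E3} (hW : ContDiff ℝ (⊤ : ℕ∞) W) (θ : ℝ) (hθ : θ ∈ Ioo (-δ) δ) :
    (pdE 0 W (Tmap φ 0 0 θ)) 0 + (pdE 1 W (Tmap φ 0 0 θ)) 1 =
      Dr (vrComp φ W) 0 0 θ - curveKappa φ θ * vrComp φ W 0 0 θ + Dθ (vθComp φ W) 0 0 θ := by
  have h1 := (curveN_smooth hφ hcurv).1
  have hn := isOpen_Ioo.mem_nhds hθ
  have d0 : DifferentiableAt ℝ φ θ := (hφ.contDiffAt hn).differentiableAt (by simp)
  have d1 : DifferentiableAt ℝ (deriv φ) θ := (h1.contDiffAt hn).differentiableAt (by simp)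
  have hWd := ((hW.differentiable (by simp)) (Tmap φ 0 0 θ)).hasFDerivAt
  have er : Dr (vrComp φ W) 0 0 θ =
      inner ℝ (fderiv ℝ W (Tmap φ 0 0 θ) (emb23 (curveN φ θ))) (emb23 (curveN φ θ)) := by
    have := ((hWd.comp_hasDerivAt (0:ℝ) (T_dr φ 0 0 θ)).inner ℝ
      (hasDerivAt_const (0:ℝ) (emb23 (curveN φ θ)))).deriv
    simpa [Dr, vrComp] using this
  have eθ : Dθ (vθComp φ W) 0 0 θ =
      inner ℝ (W (Tmap φ 0 0 θ)) (emb23 (deriv (deriv φ) θ)) +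
      inner ℝ (fderiv ℝ W (Tmap φ 0 0 θ) (emb23 (deriv φ θ))) (emb23 (deriv φ θ)) := by
    have hT : HasDerivAt (fun s => Tmap φ 0 0 s) (emb23 (deriv φ θ)) θ := by
      simp_rw [T_zero]
      exact emb_deriv d0
    exact ((hWd.comp_hasDerivAt θ hT).inner ℝ (emb_deriv d1)).deriv
  have hk : deriv (deriv φ) θ = curveKappa φ θ • curveN φ θ := by
    simp [curveKappa, curveN, smul_smul, hcurv θ hθ]
  have hN1 : ‖curveN φ θ‖ = 1 := by
    simp [curveN, norm_smul, hcurv θ hθ]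
  have horth : inner ℝ (deriv φ θ) (deriv (deriv φ) θ) = 0 := by
    have e1 := (d1.hasDerivAt.inner ℝ d1.hasDerivAt)
    have e2 : (fun s => inner ℝ (deriv φ s) (deriv φ s)) =ᶠ[𝓝 θ] fun _ => (1:ℝ) := by
      filter_upwards [hn] with s hs
      rw [real_inner_self_eq_norm_sq, hunit s hs]; norm_num
    have e3 := e1.deriv
    rw [e2.deriv_eq] at e3
    rw [real_inner_comm (deriv φ θ) (deriv (deriv φ) θ)] at e3
    simp at e3
    linarith
  have k0 : curveKappa φ θ ≠ 0 := norm_ne_zero_iff.2 (hcurv θ hθ)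
  rw [hk, inner_smul_right] at horth
  have ho := (mul_eq_zero.1 horth).resolve_left k0
  have hu := real_inner_self_eq_norm_sq (deriv φ θ)
  have hu' := real_inner_self_eq_norm_sq (curveN φ θ)
  rw [hunit θ hθ] at hu
  rw [hN1] at hu'
  simp only [PiLp.inner_apply, Fin.sum_univ_two, RCLike.inner_apply, conj_trivial] at ho hu hu'
  obtain ⟨o1, o2, o3⟩ := ortho_alg (a := deriv φ θ 0) (b := deriv φ θ 1) (c := curveN φ θ 0)
    (d := curveN φ θ 1) (by linarith) (by linarith) (by linarith)
  rw [er, eθ, hk]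
  simp only [vrComp, inner_emb, fd_emb, PiLp.add_apply, PiLp.smul_apply, smul_eq_mul]
  linear_combination (-(pdE 0 W (Tmap φ 0 0 θ)) 0) * o1 - (pdE 1 W (Tmap φ 0 0 θ)) 1 * o3
    - ((pdE 0 W (Tmap φ 0 0 θ)) 1 + (pdE 1 W (Tmap φ 0 0 θ)) 0) * o2

/-- For a smooth divergence-free vector field `v` vanishing on the
boundary plane `{x₃ = 0}`, at every point `(0,0,θ̄)` the tangential derivative of the
normal component of `curl curl v` (`= −Δv`) satisfies
`∂_θ̄[(curl curl v)(T)·(0,0,1)] = −κ'·∂_z v_r̄ − κ·∂_z∂_θ̄ v_r̄ + ∂_z∂_r̄∂_θ̄ v_r̄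
  + ∂_z∂_θ̄² v_θ̄`. -/
theorem stmt11 (δ : ℝ) (hδ : 0 < δ) (φ : ℝ → EuclideanSpace ℝ (Fin 2))
    (hφ : ContDiffOn ℝ (⊤ : ℕ∞) φ (Set.Ioo (-δ) δ))
    (hunit : ∀ θ ∈ Set.Ioo (-δ) δ, ‖deriv φ θ‖ = 1)
    (hcurv : ∀ θ ∈ Set.Ioo (-δ) δ, deriv (deriv φ) θ ≠ 0)
    (v : EuclideanSpace ℝ (Fin 3) → EuclideanSpace ℝ (Fin 3))
    (hv : ContDiff ℝ (⊤ : ℕ∞) v)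
    (hdiv : ∀ x : EuclideanSpace ℝ (Fin 3), div3 v x = 0)
    (hbd : ∀ x : EuclideanSpace ℝ (Fin 3), x 2 = 0 → v x = 0) :
    ∀ θ ∈ Set.Ioo (-δ) δ,
      Dθ (fun z' r' θ' =>
          (inner ℝ (curl3 (curl3 v) (Tmap φ z' r' θ'))
            (EuclideanSpace.single 2 (1:ℝ)) : ℝ)) 0 0 θ
        = -(deriv (curveKappa φ) θ * Dz (vrComp φ v) 0 0 θ)
          - curveKappa φ θ * Dz (Dθ (vrComp φ v)) 0 0 θ
          + Dz (Dr (Dθ (vrComp φ v))) 0 0 θ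
          + Dz (Dθ (Dθ (vθComp φ v))) 0 0 θ := by
  intro θ hθ
  obtain ⟨h1, hκ, hN⟩ := curveN_smooth hφ hcurv
  have hW := W_smooth hv 2
  have sr : Sm δ (vrComp φ v) := comp_smooth hφ hN hN hv
  have sθ : Sm δ (vθComp φ v) := comp_smooth hφ hN h1 hv
  have sr' : Sm δ (vrComp φ (pdE 2 v)) := comp_smooth hφ hN hN hW
  have sθ' : Sm δ (vθComp φ (pdE 2 v)) := comp_smooth hφ hN h1 hW
  have zr : Dz (vrComp φ v) = vrComp φ (pdE 2 v) := comp_dz φ (curveN φ) hv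
  have zθ : Dz (vθComp φ v) = vθComp φ (pdE 2 v) := comp_dz φ (deriv φ) hv
  have e1 : ∀ z r, ∀ θ ∈ Ioo (-δ) δ,
      Dz (Dθ (vrComp φ v)) z r θ = Dθ (vrComp φ (pdE 2 v)) z r θ := by
    intro z r θ hθ
    rw [sr.zθ hθ, zr]
  have e2 : ∀ z r, ∀ θ ∈ Ioo (-δ) δ,
      Dz (Dθ (vθComp φ v)) z r θ = Dθ (vθComp φ (pdE 2 v)) z r θ := by
    intro z r θ hθ
    rw [sθ.zθ hθ, zθ]
  rw [zr, e1 _ _ _ hθ, sr.Dθ.zr hθ, Dr_congr' e1 _ _ _ hθ, sr'.rθ hθ,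
    sθ.Dθ.zθ hθ, Dθ_congr' e2 _ _ _ hθ]
  have hl : (fun s => (inner ℝ (curl3 (curl3 v) (Tmap φ 0 0 s))
      (EuclideanSpace.single 2 (1:ℝ)) : ℝ)) =ᶠ[𝓝 θ] fun s =>
      Dr (vrComp φ (pdE 2 v)) 0 0 s - curveKappa φ s * vrComp φ (pdE 2 v) 0 0 s
        + Dθ (vθComp φ (pdE 2 v)) 0 0 s := by
    filter_upwards [isOpen_Ioo.mem_nhds hθ] with s hs
    rw [lhs_eq hv hbd _ (by simp [Tmap]), div_frame hφ hunit hcurv hW s hs]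
  have hκd : HasDerivAt (curveKappa φ) (deriv (curveKappa φ) θ) θ :=
    ((hκ.contDiffAt (isOpen_Ioo.mem_nhds hθ)).differentiableAt (by simp)).hasDerivAt
  have A := (sr'.Dr.dθ (z := 0) (r := 0) hθ).differentiableAt.hasDerivAt
  have B := (sr'.dθ (z := 0) (r := 0) hθ).differentiableAt.hasDerivAt
  have C := (sθ'.Dθ.dθ (z := 0) (r := 0) hθ).differentiableAt.hasDerivAt
  have key := ((A.sub (hκd.mul B)).add C).deriv
  have fin := hl.deriv_eq.trans key
  refine Eq.trans fin ?_
  change Dθ (Dr (vrComp φ (pdE 2 v))) 0 0 θ - (deriv (curveKappa φ) θ * vrComp φ (pdE 2 v) 0 0 θ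
    + curveKappa φ θ * Dθ (vrComp φ (pdE 2 v)) 0 0 θ) + Dθ (Dθ (vθComp φ (pdE 2 v))) 0 0 θ = _
  ring
end
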